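/- Let a, b, c, λ, Δt be real numbers with λ > 0 and Δt > 0; set l = 2a + b² + λc(2 + c) and assume l < 0. On a probability space, for each n ∈ ℕ let X_n and ΔW_n be real random variables and ΔN_n an ℕ-valued random variable such that: ΔW_n has law gaussianReal 0 Δt; ΔN_n has the Poisson distribution with parameter λΔt; the three random variables X_n, ΔW_n, ΔN_n are mutually independent; E[X_n²] < ∞; and almost surely X_{n+1} = X_n + a·X_n·Δt/(1 + Δt·|a·X_n|) + b·X_n·ΔW_n + c·X_n·ΔN_n (the tamed Euler scheme applied to the linear test equation). Then: (i) if a(1 + λcΔt) ≤ 0, then for every n, E[X_{n+1}²] ≤ (1 + (a² + λ²c²)Δt² + (b² + λc(2 + c))Δt)·E[X_n²], and this factor is < 1 provided (a² + λ²c²)Δt < 2a − l; (ii) if a(1 + λcΔt) > 0, then for every n, E[X_{n+1}²] ≤ (1 + (a + λc)²Δt² + lΔt)·E[X_n²], and this factor is < 1 provided (a + λc)²Δt < −l. Consequently, under the corresponding step-size restriction the tamed Euler scheme is mean-square stable: there is a constant ρ < 1 with E[X_n²] ≤ ρⁿ·E[X_0²] for all n. -/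

import Mathlib

open MeasureTheory ProbabilityTheory

/-!
One step of the scheme has the form `X' = φ(X) + X S`, where `φ` is the tamed drift map and the
noise `S = b ΔW + c ΔN` is independent of `X`, with mean `λcΔt` and variance `(b² + λc²)Δt`.
Centring `S` makes the cross term vanish, so that
`E[X'²] = E[(φ(X) + λcΔt X)²] + (b² + λc²)Δt E[X²]`.
Since `φ(x) = x (1 + aΔtθ)` with `0 ≤ θ ≤ 1`, the first term is at most a constant times `E[X²]`,
and the sign of `a(1 + λcΔt)` decides which value of `θ` in the linear part is the worst one.

Measurability has to be recovered: the counts are a.e.-measurable because the outer measures of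
their level sets add up to `1`, and `|X| = √(X²)` is all that is needed of `X` since `φ` is odd.
-/

section Measurability

variable {Ω : Type*} [MeasurableSpace Ω] {P : Measure Ω}

lemma nullMeasurableSet_of_measure_add_measure_compl_le [IsFiniteMeasure P] {s : Set Ω}
    (h : P s + P sᶜ ≤ P Set.univ) : NullMeasurableSet s P := by
  set t := toMeasurable P s
  set u := toMeasurable P sᶜ
  have hut : uᶜ ⊆ s := Set.compl_subset_comm.1 (subset_toMeasurable P sᶜ)
  have hst : s ⊆ t := subset_toMeasurable P s
  have hu : MeasurableSet u := measurableSet_toMeasurable P sᶜ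
  have hle : P t ≤ P uᶜ := by
    rw [measure_compl hu (measure_ne_top P u), measure_toMeasurable, measure_toMeasurable]
    exact ENNReal.le_sub_of_add_le_right (measure_ne_top P sᶜ) h
  have heq : (uᶜ : Set Ω) =ᵐ[P] t := ae_eq_of_subset_of_measure_ge (hut.trans hst) hle
    hu.compl.nullMeasurableSet (measure_ne_top P t)
  exact hu.compl.nullMeasurableSet.congr
    (hut.eventuallyLE.antisymm (hst.eventuallyLE.trans heq.symm.le))

lemma measure_preimage_le_tsum_measure_fiber {ι : Type*} [Countable ι] (N : Ω → ι) (s : Set ι) :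
    P (N ⁻¹' s) ≤ ∑' k : s, P (N ⁻¹' {(k : ι)}) := by
  rw [← Set.biUnion_preimage_singleton]
  exact measure_biUnion_le P s.to_countable _

lemma aemeasurable_of_tsum_measure_fiber_le [IsFiniteMeasure P] {ι : Type*} [Countable ι]
    [MeasurableSpace ι] {N : Ω → ι} (h : ∑' k, P (N ⁻¹' {k}) ≤ P Set.univ) : AEMeasurable N P := by
  refine NullMeasurable.aemeasurable fun s _ ↦
    nullMeasurableSet_of_measure_add_measure_compl_le ?_
  calc P (N ⁻¹' s) + P (N ⁻¹' s)ᶜ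
      ≤ ∑' k : s, P (N ⁻¹' {(k : ι)}) + ∑' k : ↥sᶜ, P (N ⁻¹' {(k : ι)}) :=
        add_le_add (measure_preimage_le_tsum_measure_fiber N s)
          (measure_preimage_le_tsum_measure_fiber N sᶜ)
    _ = ∑' k, P (N ⁻¹' {k}) :=
        ENNReal.summable.tsum_add_tsum_compl (f := fun k ↦ P (N ⁻¹' {k})) ENNReal.summable
    _ ≤ P Set.univ := h

end Measurability

section MeanVariance

/-- `X` is square-integrable under `P`, with mean `m` and variance `v`: all that is used of the
law of an increment. -/
structure HasMeanVariance {Ω : Type*} [MeasurableSpace Ω] (X : Ω → ℝ) (m v : ℝ)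
    (P : Measure Ω) : Prop where
  memLp : MemLp X 2 P
  integral_eq : P[X] = m
  variance_eq : Var[X; P] = v

namespace HasMeanVariance

variable {Ω : Type*} [MeasurableSpace Ω] {P : Measure Ω} {X Y : Ω → ℝ} {m v m' v' : ℝ}

lemma of_hasLaw {μ : Measure ℝ} (hX : HasLaw X μ P) (hμ : HasMeanVariance id m v μ) :
    HasMeanVariance X m v P where
  memLp := (hX.map_eq ▸ hμ.memLp).comp_of_map hX.aemeasurable
  integral_eq := hX.integral_eq.trans hμ.integral_eq
  variance_eq := hX.variance_eq.trans hμ.variance_eq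

lemma const_mul_add_const_mul [IsFiniteMeasure P] (hX : HasMeanVariance X m v P)
    (hY : HasMeanVariance Y m' v' P) (hXY : cov[X, Y; P] = 0) (b c : ℝ) :
    HasMeanVariance (fun ω ↦ b * X ω + c * Y ω) (b * m + c * m') (b ^ 2 * v + c ^ 2 * v') P where
  memLp := (hX.memLp.const_mul b).add (hY.memLp.const_mul c)
  integral_eq := by
    rw [integral_add ((hX.memLp.integrable one_le_two).const_mul b)
      ((hY.memLp.integrable one_le_two).const_mul c), integral_const_mul, integral_const_mul,
      hX.integral_eq, hY.integral_eq]
  variance_eq := by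
    rw [variance_fun_add (hX.memLp.const_mul b) (hY.memLp.const_mul c), variance_const_mul,
      variance_const_mul, covariance_const_mul_left, covariance_const_mul_right, hXY,
      hX.variance_eq, hY.variance_eq]
    ring

end HasMeanVariance

lemma hasMeanVariance_id_gaussianReal (m : ℝ) (v : NNReal) :
    HasMeanVariance id m v (gaussianReal m v) :=
  ⟨memLp_id_gaussianReal 2, integral_id_gaussianReal, variance_id_gaussianReal⟩

lemma hasMeanVariance_of_map_eq_gaussianReal {Ω : Type*} [MeasurableSpace Ω] {P : Measure Ω}
    {X : Ω → ℝ} {m : ℝ} {v : NNReal} (hX : P.map X = gaussianReal m v) :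
    HasMeanVariance X m v P :=
  .of_hasLaw ⟨aemeasurable_of_map_neZero (hX ▸ inferInstance), hX⟩
    (hasMeanVariance_id_gaussianReal m v)

end MeanVariance

section Poisson

lemma hasSum_descFactorial_poissonMeasure (r : NNReal) (k : ℕ) :
    HasSum (fun n : ℕ ↦ Real.exp (-r) * (r : ℝ) ^ n / n.factorial * (n.descFactorial k : ℝ))
      ((r : ℝ) ^ k) := by
  have hsmall : ∑ n ∈ Finset.range k,
      Real.exp (-r) * (r : ℝ) ^ n / n.factorial * (n.descFactorial k : ℝ) = 0 :=
    Finset.sum_eq_zero fun n hn ↦ by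
      rw [Nat.descFactorial_of_lt (Finset.mem_range.1 hn), Nat.cast_zero, mul_zero]
  have hshift (n : ℕ) : Real.exp (-r) * (r : ℝ) ^ (n + k) / (n + k).factorial *
      ((n + k).descFactorial k : ℝ)
        = (r : ℝ) ^ k * (Real.exp (-r) * (r : ℝ) ^ n / n.factorial) := by
    rw [← Nat.factorial_mul_descFactorial (Nat.le_add_left k n), Nat.add_sub_cancel, Nat.cast_mul]
    have : ((n + k).descFactorial k : ℝ) ≠ 0 :=
      Nat.cast_ne_zero.2 (Nat.descFactorial_pos.2 (Nat.le_add_left k n)).ne'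
    field_simp
    ring
  rw [← hasSum_nat_add_iff' k, hsmall, sub_zero]
  simpa only [hshift, mul_one] using (hasSum_one_poissonMeasure r).mul_left ((r : ℝ) ^ k)

lemma hasSum_sq_poissonMeasure (r : NNReal) :
    HasSum (fun n : ℕ ↦ Real.exp (-r) * (r : ℝ) ^ n / n.factorial * (n : ℝ) ^ 2)
      ((r : ℝ) + (r : ℝ) ^ 2) := by
  have h := (hasSum_descFactorial_poissonMeasure r 1).add (hasSum_descFactorial_poissonMeasure r 2)
  rw [pow_one] at h
  refine h.congr_fun fun n ↦ ?_
  rw [Nat.descFactorial_one, Nat.cast_descFactorial_two]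
  ring

lemma hasMeanVariance_id_map_cast_poissonMeasure (r : NNReal) :
    HasMeanVariance id r r Po(ℝ, r) := by
  have hmemLp : MemLp id 2 Po(ℝ, r) := by
    rw [memLp_map_measure_iff aestronglyMeasurable_id .of_discrete,
      memLp_two_iff_integrable_sq .of_discrete, integrable_poissonMeasure_iff]
    simpa using (hasSum_sq_poissonMeasure r).summable
  have hmean : ∫ x, id x ∂Po(ℝ, r) = r := by
    rw [integral_map .of_discrete aestronglyMeasurable_id, integral_poissonMeasure]
    simpa using (hasSum_descFactorial_poissonMeasure r 1).tsum_eq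
  have hsq : ∫ x, id x ^ 2 ∂Po(ℝ, r) = r + (r : ℝ) ^ 2 := by
    rw [integral_map .of_discrete (by fun_prop), integral_poissonMeasure]
    exact (hasSum_sq_poissonMeasure r).tsum_eq
  refine ⟨hmemLp, hmean, ?_⟩
  rw [variance_eq_sub hmemLp, hmean]
  simp only [Pi.pow_apply, hsq, add_sub_cancel_right]

lemma hasLaw_poissonMeasure_of_measure_fiber {Ω : Type*} [MeasurableSpace Ω] {P : Measure Ω}
    [IsProbabilityMeasure P] {N : Ω → ℕ} {r : NNReal}
    (hN : ∀ k : ℕ, P {ω | N ω = k}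
      = ENNReal.ofReal (Real.exp (-r) * (r : ℝ) ^ k / k.factorial)) :
    HasLaw N Po(r) P := by
  have hfiber (k : ℕ) : P (N ⁻¹' {k}) = Po(r) {k} :=
    (hN k).trans (poissonMeasure_singleton r k).symm
  have hmeas : AEMeasurable N P := by
    refine aemeasurable_of_tsum_measure_fiber_le (le_of_eq ?_)
    simp_rw [hfiber]
    rw [measure_univ, ← measure_univ (μ := Po(r)), ← Set.iUnion_of_singleton ℕ,
      measure_iUnion (fun _ _ ↦ Set.disjoint_singleton.2) fun k ↦ measurableSet_singleton k]
  refine ⟨hmeas, Measure.ext_of_singleton fun k ↦ ?_⟩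
  rw [Measure.map_apply_of_aemeasurable hmeas (measurableSet_singleton k), hfiber]

lemma hasMeanVariance_natCast_of_measure_fiber {Ω : Type*} [MeasurableSpace Ω] {P : Measure Ω}
    [IsProbabilityMeasure P] {N : Ω → ℕ} {r : NNReal}
    (hN : ∀ k : ℕ, P {ω | N ω = k}
      = ENNReal.ofReal (Real.exp (-r) * (r : ℝ) ^ k / k.factorial)) :
    HasMeanVariance (fun ω ↦ (N ω : ℝ)) r r P :=
  .of_hasLaw (HasLaw.fun_comp ⟨.of_discrete, rfl⟩ (hasLaw_poissonMeasure_of_measure_fiber hN))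
    (hasMeanVariance_id_map_cast_poissonMeasure r)

end Poisson

section SecondMoment

variable {Ω : Type*} [MeasurableSpace Ω] {P : Measure Ω}

lemma memLp_two_abs_of_integrable_sq {X : Ω → ℝ} (hX : Integrable (fun ω ↦ X ω ^ 2) P) :
    MemLp (fun ω ↦ |X ω|) 2 P := by
  have hmeas : AEMeasurable (fun ω ↦ |X ω|) P := by
    simpa only [Real.sqrt_sq_eq_abs] using hX.aemeasurable.sqrt
  rw [memLp_two_iff_integrable_sq hmeas.aestronglyMeasurable]
  simpa only [sq_abs] using hX

variable [IsProbabilityMeasure P]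

lemma integral_sq_add_mul_of_indepFun {A B S : Ω → ℝ} {m v : ℝ} (hA : MemLp A 2 P)
    (hB : MemLp B 2 P) (hS : HasMeanVariance S m v P)
    (hind : IndepFun (fun ω ↦ (A ω, B ω)) S P) :
    ∫ ω, (A ω + B ω * S ω) ^ 2 ∂P = ∫ ω, (A ω + m * B ω) ^ 2 ∂P + v * ∫ ω, B ω ^ 2 ∂P := by
  set D : Ω → ℝ := fun ω ↦ A ω + m * B ω
  set T : Ω → ℝ := fun ω ↦ S ω - m
  have hD : MemLp D 2 P := hA.add (hB.const_mul m)
  have hT : MemLp T 2 P := hS.memLp.sub (memLp_const m)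
  have hDB : Integrable (fun ω ↦ D ω * B ω) P := hD.integrable_mul hB
  have hindDB : IndepFun (fun ω ↦ D ω * B ω) T P :=
    hind.comp (φ := fun p : ℝ × ℝ ↦ (p.1 + m * p.2) * p.2) (ψ := fun s ↦ s - m)
      (by fun_prop) (by fun_prop)
  have hindB : IndepFun (fun ω ↦ B ω ^ 2) (fun ω ↦ T ω ^ 2) P :=
    hind.comp (φ := fun p : ℝ × ℝ ↦ p.2 ^ 2) (ψ := fun s ↦ (s - m) ^ 2)
      (by fun_prop) (by fun_prop)
  have hDBT : Integrable (fun ω ↦ D ω * B ω * T ω) P :=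
    hindDB.integrable_mul hDB (hT.integrable one_le_two)
  have hBT : Integrable (fun ω ↦ B ω ^ 2 * T ω ^ 2) P :=
    hindB.integrable_mul hB.integrable_sq hT.integrable_sq
  have hT0 : ∫ ω, T ω ∂P = 0 := by
    rw [integral_sub (hS.memLp.integrable one_le_two) (integrable_const m), hS.integral_eq]
    simp
  have hTsq : ∫ ω, T ω ^ 2 ∂P = v := by
    rw [← hS.variance_eq, variance_eq_integral hS.memLp.aemeasurable, hS.integral_eq]
  have hsum : Integrable (fun ω ↦ D ω ^ 2 + 2 * (D ω * B ω * T ω)) P :=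
    hD.integrable_sq.add (hDBT.const_mul 2)
  calc ∫ ω, (A ω + B ω * S ω) ^ 2 ∂P
      = ∫ ω, (D ω ^ 2 + 2 * (D ω * B ω * T ω) + B ω ^ 2 * T ω ^ 2) ∂P :=
        integral_congr_ae (.of_forall fun ω ↦ by simp only [D, T]; ring)
    _ = ∫ ω, D ω ^ 2 ∂P + 2 * ((∫ ω, D ω * B ω ∂P) * ∫ ω, T ω ∂P)
          + (∫ ω, B ω ^ 2 ∂P) * ∫ ω, T ω ^ 2 ∂P := by
        rw [integral_add hsum hBT,
          integral_add hD.integrable_sq (hDBT.const_mul 2), integral_const_mul,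
          hindDB.integral_fun_mul_eq_mul_integral hDB.1 hT.1,
          hindB.integral_fun_mul_eq_mul_integral hB.integrable_sq.1 hT.integrable_sq.1]
    _ = ∫ ω, D ω ^ 2 ∂P + v * ∫ ω, B ω ^ 2 ∂P := by
        rw [hT0, hTsq]
        ring

-- `X` itself may fail to be a.e.-measurable; oddness of `φ` lets `|X|` replace it.
lemma integral_sq_le_of_eq_add_mul_of_indepFun {X X' S : Ω → ℝ} {φ : ℝ → ℝ} {m v κ : ℝ}
    (hφ : Measurable φ) (hodd : Function.Odd φ)
    (hκ : ∀ x, (φ x + m * x) ^ 2 ≤ κ * x ^ 2)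
    (hX : Integrable (fun ω ↦ X ω ^ 2) P) (hS : HasMeanVariance S m v P) (hXS : IndepFun X S P)
    (hX' : ∀ᵐ ω ∂P, X' ω = φ (X ω) + X ω * S ω) :
    ∫ ω, X' ω ^ 2 ∂P ≤ (κ + v) * ∫ ω, X ω ^ 2 ∂P := by
  have habs : MemLp (fun ω ↦ |X ω|) 2 P := memLp_two_abs_of_integrable_sq hX
  have hφX : AEMeasurable (fun ω ↦ φ |X ω|) P := hφ.comp_aemeasurable habs.aemeasurable
  have hmean : MemLp (fun ω ↦ φ |X ω| + m * |X ω|) 2 P := by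
    refine habs.of_le_mul (c := √κ)
      (hφX.add (habs.aemeasurable.const_mul _)).aestronglyMeasurable (.of_forall fun ω ↦ ?_)
    calc ‖φ |X ω| + m * |X ω|‖ ≤ √(κ * |X ω| ^ 2) := Real.abs_le_sqrt (hκ _)
      _ = √κ * ‖|X ω|‖ := by
        rw [Real.sqrt_mul' _ (sq_nonneg _), Real.sqrt_sq_eq_abs, Real.norm_eq_abs]
  have hdrift : MemLp (fun ω ↦ φ |X ω|) 2 P :=
    (hmean.sub (habs.const_mul m)).ae_eq (.of_forall fun ω ↦ add_sub_cancel_right _ _)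
  have hind : IndepFun (fun ω ↦ (φ |X ω|, |X ω|)) S P :=
    hXS.comp (φ := fun x ↦ (φ |x|, |x|)) (ψ := id) (by fun_prop) measurable_id
  have hsq : ∀ᵐ ω ∂P, X' ω ^ 2 = (φ |X ω| + |X ω| * S ω) ^ 2 := by
    filter_upwards [hX'] with ω hω
    rcases abs_choice (X ω) with h | h <;> rw [hω, h]
    rw [hodd]
    ring
  calc ∫ ω, X' ω ^ 2 ∂P
      = ∫ ω, (φ |X ω| + m * |X ω|) ^ 2 ∂P + v * ∫ ω, |X ω| ^ 2 ∂P := by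
        rw [integral_congr_ae hsq, integral_sq_add_mul_of_indepFun hdrift habs hS hind]
    _ ≤ ∫ ω, κ * |X ω| ^ 2 ∂P + v * ∫ ω, |X ω| ^ 2 ∂P := by
        gcongr ?_ + _
        exact integral_mono hmean.integrable_sq (habs.integrable_sq.const_mul κ) fun ω ↦ hκ _
    _ = (κ + v) * ∫ ω, X ω ^ 2 ∂P := by
        simp only [sq_abs, integral_const_mul]
        ring

end SecondMoment

section TamedEuler

/-- The deterministic part `x ↦ x + a x Δt / (1 + Δt |a x|)` of one step of the tamed Euler scheme
for the linear drift `a x`. -/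
noncomputable def tamedEulerMap (a Δt x : ℝ) : ℝ := x + a * x * Δt / (1 + Δt * |a * x|)

variable {a Δt : ℝ}

lemma measurable_tamedEulerMap : Measurable (tamedEulerMap a Δt) := by
  unfold tamedEulerMap
  fun_prop

lemma odd_tamedEulerMap : Function.Odd (tamedEulerMap a Δt) := by
  intro x
  simp only [tamedEulerMap, mul_neg, abs_neg]
  ring

lemma exists_tamedEulerMap_eq (hΔt : 0 ≤ Δt) (x : ℝ) :
    ∃ θ : ℝ, 0 ≤ θ ∧ θ ≤ 1 ∧ tamedEulerMap a Δt x = (1 + a * Δt * θ) * x := by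
  refine ⟨(1 + Δt * |a * x|)⁻¹, by positivity, inv_le_one_of_one_le₀ ?_, ?_⟩
  · exact le_add_of_nonneg_right (by positivity)
  · rw [tamedEulerMap, div_eq_mul_inv]
    ring

lemma tamedEulerMap_add_mul_sq_le {m κ : ℝ} (hΔt : 0 ≤ Δt)
    (h : ∀ θ : ℝ, 0 ≤ θ → θ ≤ 1 →
      (1 + m) ^ 2 + 2 * (a * (1 + m)) * (Δt * θ) + (a * Δt) ^ 2 ≤ κ) (x : ℝ) :
    (tamedEulerMap a Δt x + m * x) ^ 2 ≤ κ * x ^ 2 := by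
  obtain ⟨θ, hθ0, hθ1, hx⟩ := exists_tamedEulerMap_eq (a := a) hΔt x
  have hθsq : (a * Δt * θ) ^ 2 ≤ (a * Δt) ^ 2 := by
    rw [mul_pow]
    exact mul_le_of_le_one_right (sq_nonneg _) (pow_le_one₀ hθ0 hθ1)
  calc (tamedEulerMap a Δt x + m * x) ^ 2
      = ((1 + m) ^ 2 + 2 * (a * (1 + m)) * (Δt * θ) + (a * Δt * θ) ^ 2) * x ^ 2 := by
        rw [hx]
        ring
    _ ≤ κ * x ^ 2 := by
        gcongr
        exact (add_le_add_right hθsq _).trans (h θ hθ0 hθ1)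

lemma tamedEulerMap_add_mul_sq_le_of_nonpos {m : ℝ} (hΔt : 0 ≤ Δt) (ham : a * (1 + m) ≤ 0)
    (x : ℝ) :
    (tamedEulerMap a Δt x + m * x) ^ 2 ≤ ((1 + m) ^ 2 + (a * Δt) ^ 2) * x ^ 2 := by
  refine tamedEulerMap_add_mul_sq_le hΔt (fun θ hθ0 _ ↦ ?_) x
  linarith [mul_nonpos_of_nonpos_of_nonneg ham (mul_nonneg hΔt hθ0)]

lemma tamedEulerMap_add_mul_sq_le_of_nonneg {m : ℝ} (hΔt : 0 ≤ Δt) (ham : 0 ≤ a * (1 + m))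
    (x : ℝ) :
    (tamedEulerMap a Δt x + m * x) ^ 2 ≤ (1 + m + a * Δt) ^ 2 * x ^ 2 := by
  refine tamedEulerMap_add_mul_sq_le hΔt (fun θ _ hθ1 ↦ ?_) x
  linarith [mul_le_mul_of_nonneg_left (mul_le_of_le_one_right hΔt hθ1) ham]

lemma integral_sq_le_of_tamedEuler_step {Ω : Type*} [MeasurableSpace Ω] {P : Measure Ω}
    [IsProbabilityMeasure P] {b c lam κ : ℝ} {X X' W J : Ω → ℝ}
    (hW : HasMeanVariance W 0 Δt P) (hJ : HasMeanVariance J (lam * Δt) (lam * Δt) P)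
    (hWJ : cov[W, J; P] = 0) (hXWJ : IndepFun X (fun ω ↦ (W ω, J ω)) P)
    (hX : Integrable (fun ω ↦ X ω ^ 2) P)
    (hX' : ∀ᵐ ω ∂P, X' ω = X ω + a * X ω * Δt / (1 + Δt * |a * X ω|)
      + b * X ω * W ω + c * X ω * J ω)
    (hκ : ∀ x, (tamedEulerMap a Δt x + lam * c * Δt * x) ^ 2 ≤ κ * x ^ 2) :
    ∫ ω, X' ω ^ 2 ∂P ≤ (κ + (b ^ 2 + lam * c ^ 2) * Δt) * ∫ ω, X ω ^ 2 ∂P := by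
  have hS : HasMeanVariance (fun ω ↦ b * W ω + c * J ω) (lam * c * Δt)
      ((b ^ 2 + lam * c ^ 2) * Δt) P := by
    convert hW.const_mul_add_const_mul hJ hWJ b c using 1 <;> ring
  have hXS : IndepFun X (fun ω ↦ b * W ω + c * J ω) P :=
    hXWJ.comp (ψ := fun p : ℝ × ℝ ↦ b * p.1 + c * p.2) measurable_id (by fun_prop)
  refine integral_sq_le_of_eq_add_mul_of_indepFun measurable_tamedEulerMap odd_tamedEulerMap
    hκ hX hS hXS ?_
  filter_upwards [hX'] with ω hω
  rw [hω, tamedEulerMap]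
  ring

end TamedEuler

lemma exists_rate_of_succ_le_mul {u : ℕ → ℝ} {K : ℝ} (hu : ∀ n, 0 ≤ u n) (hK : K < 1)
    (hstep : ∀ n, u (n + 1) ≤ K * u n) :
    ∃ ρ : ℝ, 0 ≤ ρ ∧ ρ < 1 ∧ ∀ n, u n ≤ ρ ^ n * u 0 :=
  ⟨max K 0, le_max_right K 0, max_lt hK one_pos, fun n ↦ le_geom (le_max_right K 0) n fun k _ ↦
    (hstep k).trans (mul_le_mul_of_nonneg_right (le_max_left K 0) (hu k))⟩

/-- Only the first two moments of the increments matter: the Brownian and Poisson increments may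
be replaced by any square-integrable, uncorrelated increments with the same mean and variance, as
in weak approximation schemes. -/
theorem tamed_linear_mean_square_stability_general
    (a b c lam Δt : ℝ) (hΔt : 0 < Δt)
    (l : ℝ) (hl : l = 2 * a + b ^ 2 + lam * c * (2 + c))
    {Ω : Type*} [MeasurableSpace Ω] (P : Measure Ω) [IsProbabilityMeasure P]
    (X W J : ℕ → Ω → ℝ)
    (hW : ∀ n, HasMeanVariance (W n) 0 Δt P)
    (hJ : ∀ n, HasMeanVariance (J n) (lam * Δt) (lam * Δt) P)
    (hWJ : ∀ n, cov[W n, J n; P] = 0)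
    (hXWJ : ∀ n, IndepFun (X n) (fun ω => (W n ω, J n ω)) P)
    (hint : ∀ n, Integrable (fun ω => (X n ω) ^ 2) P)
    (hrec : ∀ n, ∀ᵐ ω ∂P,
      X (n + 1) ω = X n ω + a * X n ω * Δt / (1 + Δt * |a * X n ω|)
        + b * X n ω * W n ω + c * X n ω * J n ω) :
    ((a * (1 + lam * c * Δt) ≤ 0 → ∀ n,
      (∫ ω, (X (n + 1) ω) ^ 2 ∂P)
        ≤ (1 + (a ^ 2 + lam ^ 2 * c ^ 2) * Δt ^ 2 + (b ^ 2 + lam * c * (2 + c)) * Δt)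
            * ∫ ω, (X n ω) ^ 2 ∂P) ∧
    ((a ^ 2 + lam ^ 2 * c ^ 2) * Δt < 2 * a - l →
      1 + (a ^ 2 + lam ^ 2 * c ^ 2) * Δt ^ 2 + (b ^ 2 + lam * c * (2 + c)) * Δt < 1)) ∧
    ((0 < a * (1 + lam * c * Δt) → ∀ n,
      (∫ ω, (X (n + 1) ω) ^ 2 ∂P)
        ≤ (1 + (a + lam * c) ^ 2 * Δt ^ 2 + l * Δt) * ∫ ω, (X n ω) ^ 2 ∂P) ∧
    ((a + lam * c) ^ 2 * Δt < -l →
      1 + (a + lam * c) ^ 2 * Δt ^ 2 + l * Δt < 1)) ∧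
    (((a * (1 + lam * c * Δt) ≤ 0 ∧ (a ^ 2 + lam ^ 2 * c ^ 2) * Δt < 2 * a - l) ∨
      (0 < a * (1 + lam * c * Δt) ∧ (a + lam * c) ^ 2 * Δt < -l)) →
      ∃ ρ : ℝ, 0 ≤ ρ ∧ ρ < 1 ∧
        ∀ n, (∫ ω, (X n ω) ^ 2 ∂P) ≤ ρ ^ n * ∫ ω, (X 0 ω) ^ 2 ∂P) := by
  have hstep {κ : ℝ} (hκ : ∀ x, (tamedEulerMap a Δt x + lam * c * Δt * x) ^ 2 ≤ κ * x ^ 2)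
      (n : ℕ) : (∫ ω, (X (n + 1) ω) ^ 2 ∂P)
        ≤ (κ + (b ^ 2 + lam * c ^ 2) * Δt) * ∫ ω, (X n ω) ^ 2 ∂P :=
    integral_sq_le_of_tamedEuler_step (hW n) (hJ n) (hWJ n) (hXWJ n) (hint n) (hrec n) hκ
  have hnonpos (ha : a * (1 + lam * c * Δt) ≤ 0) (n : ℕ) : (∫ ω, (X (n + 1) ω) ^ 2 ∂P)
      ≤ (1 + (a ^ 2 + lam ^ 2 * c ^ 2) * Δt ^ 2 + (b ^ 2 + lam * c * (2 + c)) * Δt)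
          * ∫ ω, (X n ω) ^ 2 ∂P :=
    (hstep (tamedEulerMap_add_mul_sq_le_of_nonpos hΔt.le ha) n).trans_eq (by ring)
  have hpos (ha : 0 < a * (1 + lam * c * Δt)) (n : ℕ) : (∫ ω, (X (n + 1) ω) ^ 2 ∂P)
      ≤ (1 + (a + lam * c) ^ 2 * Δt ^ 2 + l * Δt) * ∫ ω, (X n ω) ^ 2 ∂P :=
    (hstep (tamedEulerMap_add_mul_sq_le_of_nonneg hΔt.le ha.le) n).trans_eq (by rw [hl]; ring)
  have hnonpos_lt (h : (a ^ 2 + lam ^ 2 * c ^ 2) * Δt < 2 * a - l) :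
      1 + (a ^ 2 + lam ^ 2 * c ^ 2) * Δt ^ 2 + (b ^ 2 + lam * c * (2 + c)) * Δt < 1 := by
    linear_combination Δt * h - Δt * hl
  have hpos_lt (h : (a + lam * c) ^ 2 * Δt < -l) :
      1 + (a + lam * c) ^ 2 * Δt ^ 2 + l * Δt < 1 := by
    linear_combination Δt * h
  have hnonneg (n : ℕ) : 0 ≤ ∫ ω, (X n ω) ^ 2 ∂P := integral_nonneg fun ω ↦ sq_nonneg (X n ω)
  refine ⟨⟨hnonpos, hnonpos_lt⟩, ⟨hpos, hpos_lt⟩, ?_⟩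
  rintro (⟨ha, hsmall⟩ | ⟨ha, hsmall⟩)
  · exact exists_rate_of_succ_le_mul hnonneg (hnonpos_lt hsmall) (hnonpos ha)
  · exact exists_rate_of_succ_le_mul hnonneg (hpos_lt hsmall) (hpos ha)

/-- Mean-square stability of the tamed Euler scheme for the linear jump test equation:
with `l = 2a + b² + λc(2+c) < 0`, (i) if `a(1 + λcΔt) ≤ 0` then
`E[X_{n+1}²] ≤ (1 + (a² + λ²c²)Δt² + (b² + λc(2+c))Δt) E[X_n²]`, the factor being `< 1`
when `(a² + λ²c²)Δt < 2a - l`; (ii) if `a(1 + λcΔt) > 0` then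
`E[X_{n+1}²] ≤ (1 + (a + λc)²Δt² + lΔt) E[X_n²]`, the factor being `< 1` when
`(a + λc)²Δt < -l`. Consequently, under the corresponding step-size restriction there
is `ρ < 1` with `E[X_n²] ≤ ρⁿ E[X_0²]`. -/
theorem tamed_linear_mean_square_stability
    (a b c lam Δt : ℝ) (hlam : 0 < lam) (hΔt : 0 < Δt)
    (l : ℝ) (hl : l = 2 * a + b ^ 2 + lam * c * (2 + c)) (hlneg : l < 0)
    {Ω : Type*} [MeasurableSpace Ω] (P : Measure Ω) [IsProbabilityMeasure P]
    (X W : ℕ → Ω → ℝ) (N : ℕ → Ω → ℕ)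
    (hWlaw : ∀ n, Measure.map (W n) P = gaussianReal 0 (Real.toNNReal Δt))
    (hNlaw : ∀ n (k : ℕ), P {ω | N n ω = k}
      = ENNReal.ofReal (Real.exp (-(lam * Δt)) * (lam * Δt) ^ k / (Nat.factorial k)))
    (hWN : ∀ n, IndepFun (W n) (N n) P)
    (hXWN : ∀ n, IndepFun (X n) (fun ω => (W n ω, N n ω)) P)
    (hint : ∀ n, Integrable (fun ω => (X n ω) ^ 2) P)
    (hrec : ∀ n, ∀ᵐ ω ∂P,
      X (n + 1) ω = X n ω + a * X n ω * Δt / (1 + Δt * |a * X n ω|)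
        + b * X n ω * W n ω + c * X n ω * (N n ω : ℝ)) :
    ((a * (1 + lam * c * Δt) ≤ 0 → ∀ n,
      (∫ ω, (X (n + 1) ω) ^ 2 ∂P)
        ≤ (1 + (a ^ 2 + lam ^ 2 * c ^ 2) * Δt ^ 2 + (b ^ 2 + lam * c * (2 + c)) * Δt)
            * ∫ ω, (X n ω) ^ 2 ∂P) ∧
    ((a ^ 2 + lam ^ 2 * c ^ 2) * Δt < 2 * a - l →
      1 + (a ^ 2 + lam ^ 2 * c ^ 2) * Δt ^ 2 + (b ^ 2 + lam * c * (2 + c)) * Δt < 1)) ∧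
    ((0 < a * (1 + lam * c * Δt) → ∀ n,
      (∫ ω, (X (n + 1) ω) ^ 2 ∂P)
        ≤ (1 + (a + lam * c) ^ 2 * Δt ^ 2 + l * Δt) * ∫ ω, (X n ω) ^ 2 ∂P) ∧
    ((a + lam * c) ^ 2 * Δt < -l →
      1 + (a + lam * c) ^ 2 * Δt ^ 2 + l * Δt < 1)) ∧
    (((a * (1 + lam * c * Δt) ≤ 0 ∧ (a ^ 2 + lam ^ 2 * c ^ 2) * Δt < 2 * a - l) ∨
      (0 < a * (1 + lam * c * Δt) ∧ (a + lam * c) ^ 2 * Δt < -l)) →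
      ∃ ρ : ℝ, 0 ≤ ρ ∧ ρ < 1 ∧
        ∀ n, (∫ ω, (X n ω) ^ 2 ∂P) ≤ ρ ^ n * ∫ ω, (X 0 ω) ^ 2 ∂P) := by
  have hr : ((lam * Δt).toNNReal : ℝ) = lam * Δt := Real.coe_toNNReal _ (mul_pos hlam hΔt).le
  have hW (n : ℕ) : HasMeanVariance (W n) 0 Δt P := by
    simpa only [Real.coe_toNNReal _ hΔt.le] using hasMeanVariance_of_map_eq_gaussianReal (hWlaw n)
  have hJ (n : ℕ) : HasMeanVariance (fun ω ↦ (N n ω : ℝ)) (lam * Δt) (lam * Δt) P :=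
    hr ▸ hasMeanVariance_natCast_of_measure_fiber (by simpa only [hr] using hNlaw n)
  have hWJ (n : ℕ) : IndepFun (W n) (fun ω ↦ (N n ω : ℝ)) P :=
    (hWN n).comp measurable_id (.of_discrete (f := Nat.cast))
  have hXWJ (n : ℕ) : IndepFun (X n) (fun ω ↦ (W n ω, (N n ω : ℝ))) P :=
    (hXWN n).comp (ψ := Prod.map id Nat.cast) measurable_id (measurable_id.prodMap .of_discrete)
  exact tamed_linear_mean_square_stability_general a b c lam Δt hΔt l hl P X W _ hW hJ
    (fun n ↦ (hWJ n).covariance_eq_zero (hW n).memLp (hJ n).memLp) hXWJ hint hrec
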